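/- arXiv:2103.17169 — 2 statements merged into one kernel-verified Lean document; each statement's English description precedes it below -/
import Mathlib

section
/- The ideal Fin'_ω is a Σ⁰_ω subset of 2^ω and its Borel separation rank equals ω, i.e., rk(Fin'_ω) = ω. -/
/-- An ideal on a set `X`: a family of subsets of `X` closed under subsets and
finite unions, containing all finite sets, and proper. -/
structure IdealOn (X : Type*) where
  sets : Set (Set X)
  subset_mem : ∀ ⦃A B : Set X⦄, A ∈ sets → B ⊆ A → B ∈ sets
  union_mem : ∀ ⦃A B : Set X⦄, A ∈ sets → B ∈ sets → A ∪ B ∈ sets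
  finite_mem : ∀ A : Set X, A.Finite → A ∈ sets
  univ_not_mem : Set.univ ∉ sets

/-- The dual filter of an ideal: the family of complements of its members. -/
def IdealOn.dual {X : Type*} (I : IdealOn X) : Set (Set X) := (·ᶜ) '' I.sets

/-- `FinPow n` is the Fubini power `Fin^{n+1}` of the ideal of finite sets, an
ideal on `ω^{n+1}` (represented as `Fin (n+1) → ℕ`). -/
def FinPow : (n : ℕ) → Set (Set (Fin (n + 1) → ℕ))
  | 0 => {A | A.Finite}
  | n + 1 => {A | {k : ℕ | {y : Fin (n + 1) → ℕ | Fin.cons k y ∈ A} ∉ FinPow n}.Finite}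

/-- Projection of `ω^n` onto the last `m` coordinates. -/
def lastProj {m n : ℕ} (h : m ≤ n) (x : Fin n → ℕ) : Fin m → ℕ :=
  fun k => x ⟨n - m + k.val, by have := k.isLt; omega⟩

/-- The inductive limit `Fin_ω` of the Fubini powers `(Fin^n)_{n>0}` along the
projections onto the last coordinates. -/
def FinOmega : Set (Set (Σ n : ℕ, Fin (n + 1) → ℕ)) :=
  {M | ∃ m : ℕ, ∃ P : Set (Fin (m + 1) → ℕ), Pᶜ ∈ FinPow m ∧
    ∀ (n : ℕ) (h : m ≤ n), ∀ x : Fin (n + 1) → ℕ,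
      lastProj (Nat.succ_le_succ h) x ∈ P → (⟨n, x⟩ : Σ n : ℕ, Fin (n + 1) → ℕ) ∉ M}

/-- A system of partitions `{X_s : s ∈ ω^{n+1}}` of `ω` into infinite sets,
with all finite cross-intersections infinite. -/
structure PartitionSystem (X : (n : ℕ) → (Fin (n + 1) → ℕ) → Set ℕ) : Prop where
  infinite : ∀ n s, (X n s).Infinite
  disjoint : ∀ (n : ℕ) (s t : Fin (n + 1) → ℕ), s ≠ t → Disjoint (X n s) (X n t)
  cover : ∀ n : ℕ, (⋃ s, X n s) = Set.univ
  cross : ∀ (F : Finset ℕ) (s : ∀ i : ℕ, Fin (i + 1) → ℕ),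
    (⋂ i ∈ F, X i (s i)).Infinite

/-- The copy `Fin^{n+2}({X_s : s ∈ ω^{n+1}})` on `ω` of the Fubini power,
with partition pieces `X s`. -/
def FinPowCopy {n : ℕ} (X : (Fin (n + 1) → ℕ) → Set ℕ) : Set (Set ℕ) :=
  {A | {s : Fin (n + 1) → ℕ | ¬ (A ∩ X s).Finite} ∈ FinPow n}

/-- `Fin'_ω`: the ideal on `ω` generated by `⋃ n, Fin^{n+2}({X_s : s ∈ ω^{n+1}})`. -/
def FinOmega' (X : (n : ℕ) → (Fin (n + 1) → ℕ) → Set ℕ) : Set (Set ℕ) :=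
  {A | ∃ F : Finset ℕ, ∃ B : ℕ → Set ℕ,
    (∀ n ∈ F, B n ∈ FinPowCopy (X n)) ∧ A ⊆ ⋃ n ∈ F, B n}

/-- The additive Borel pointclass `Σ⁰_α` (for `α ≥ 1`): `Σ⁰_1` consists of the
open sets, and for `α ≥ 2`, `Σ⁰_α` consists of countable unions of sets whose
complements lie in `Σ⁰_β` for ordinals `1 ≤ β < α`. -/
inductive SigmaMem {Y : Type*} [TopologicalSpace Y] : Ordinal → Set Y → Prop
  | isOpen {α : Ordinal} (h : 1 ≤ α) {s : Set Y} (hs : IsOpen s) : SigmaMem α s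
  | iUnion {α : Ordinal} (f : ℕ → Set Y) (g : ℕ → Ordinal)
      (hg : ∀ n, 1 ≤ g n ∧ g n < α) (hf : ∀ n, SigmaMem (g n) (f n)ᶜ) :
      SigmaMem α (⋃ n, f n)

/-- The subset of Cantor space `2^Y` of characteristic functions of members of
a family `I` of subsets of `Y`. -/
def chSet {Y : Type*} (I : Set (Set Y)) : Set (Y → Bool) :=
  {f | {y | f y = true} ∈ I}

/-- The dual family of a family of subsets: the complements of its members. -/
def dualFam {X : Type*} (I : Set (Set X)) : Set (Set X) := {B | Bᶜ ∈ I}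

/-- `I` separates from its dual at level `Σ⁰_{1+α}`: there is `S ∈ Σ⁰_{1+α}`
with `I ⊆ S` and `I* ∩ S = ∅` (in Cantor space `2^ω`). -/
def RankLE (I : Set (Set ℕ)) (α : Ordinal) : Prop :=
  ∃ S : Set (ℕ → Bool), SigmaMem (1 + α) S ∧ chSet I ⊆ S ∧
    chSet (dualFam I) ∩ S = ∅

section Helpers

open Filter

/-- The iterated Frechet filter on lists of length `d`. -/
def AEF : ℕ → Filter (List ℕ)
  | 0 => pure []
  | d + 1 => Filter.bind atTop (fun i => Filter.map (List.cons i) (AEF d))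

theorem AEF_zero {p : List ℕ → Prop} : (∀ᶠ l in AEF 0, p l) ↔ p [] := by
  simp [AEF]

theorem AEF_succ {d : ℕ} {p : List ℕ → Prop} :
    (∀ᶠ l in AEF (d + 1), p l) ↔ ∀ᶠ i in atTop, ∀ᶠ l in AEF d, p (i :: l) := by
  simp only [AEF, eventually_bind, eventually_map]

theorem AEF_length (d : ℕ) : ∀ᶠ l in AEF d, l.length = d := by
  induction d with
  | zero => simp [AEF_zero]
  | succ d ih =>
    rw [AEF_succ]
    refine Eventually.of_forall fun i => ?_
    filter_upwards [ih] with l hl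
    simp [hl]

theorem AEF_exists {d : ℕ} : ∀ {p : List ℕ → Prop}, (∀ᶠ l in AEF d, p l) → ∃ l, p l := by
  induction d with
  | zero => intro p h; exact ⟨_, AEF_zero.1 h⟩
  | succ d ih =>
    intro p h
    rw [AEF_succ] at h
    obtain ⟨i, hi⟩ := h.exists
    obtain ⟨l, hl⟩ := ih hi
    exact ⟨_, hl⟩

theorem finPow_iff (n : ℕ) : ∀ (p : List ℕ → Prop),
    {s : Fin (n + 1) → ℕ | ¬ p (List.ofFn s)} ∈ FinPow n ↔ ∀ᶠ l in AEF (n + 1), p l := by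
  induction n with
  | zero =>
    intro p
    rw [AEF_succ]
    simp only [AEF_zero]
    rw [← Nat.cofinite_eq_atTop, eventually_cofinite]
    show ({s : Fin (0 + 1) → ℕ | ¬ p (List.ofFn s)}).Finite ↔ _
    have hs : {s : Fin (0 + 1) → ℕ | ¬ p (List.ofFn s)}
        = (fun s : Fin (0 + 1) → ℕ => s 0) ⁻¹' {i | ¬ p [i]} := by
      ext s; simp [List.ofFn_succ]
    rw [hs]
    constructor
    · intro h
      refine (h.image (fun s : Fin (0 + 1) → ℕ => s 0)).subset ?_
      intro i hi
      exact ⟨fun _ => i, hi, rfl⟩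
    · intro h
      refine h.preimage ?_
      intro a _ b _ hab
      funext j
      have : j = 0 := by ext; omega
      subst this
      exact hab
  | succ n ih =>
    intro p
    rw [AEF_succ, ← Nat.cofinite_eq_atTop, eventually_cofinite]
    show ({k : ℕ | {y : Fin (n + 1) → ℕ | Fin.cons k y ∈
      {s : Fin (n + 1 + 1) → ℕ | ¬ p (List.ofFn s)}} ∉ FinPow n}).Finite ↔ _
    have : {k : ℕ | {y : Fin (n + 1) → ℕ | Fin.cons k y ∈
      {s : Fin (n + 1 + 1) → ℕ | ¬ p (List.ofFn s)}} ∉ FinPow n}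
        = {k | ¬ ∀ᶠ l in AEF (n + 1), p (k :: l)} := by
      ext k
      have := ih (fun l => p (k :: l))
      simp only [Set.mem_ofPred_eq, List.ofFn_cons]
      exact not_congr this
    rw [this]

/-! ### Borel levels -/

section Lev
universe w v
variable {Y : Type v} [TopologicalSpace Y]

/-- Ambiguous class of finite level. -/
def Lev.{w2, v2} {Y : Type v2} [TopologicalSpace Y] (k : ℕ) (S : Set Y) : Prop :=
  SigmaMem ((k : Ordinal.{w2}) + 1) S ∧ SigmaMem ((k : Ordinal.{w2}) + 1) Sᶜ

theorem Lev.compl {k : ℕ} {S : Set Y} (h : Lev.{w, v} k S) : Lev.{w, v} k Sᶜ :=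
  ⟨h.2, by simpa using h.1⟩

theorem Lev.clopen {S : Set Y} (k : ℕ) (h : IsClopen S) : Lev.{w, v} k S :=
  ⟨.isOpen (by simp) h.2, .isOpen (by simp) h.compl.2⟩

theorem Lev.const (k : ℕ) (p : Prop) : Lev.{w, v} k {_y : Y | p} := by
  by_cases hp : p
  · simpa [hp] using Lev.clopen k isClopen_univ
  · simpa [hp] using Lev.clopen k isClopen_empty

theorem Lev.iUnion_nat {k : ℕ} {f : ℕ → Set Y} (h : ∀ i, Lev.{w, v} k (f i)) :
    Lev.{w, v} (k + 2) (⋃ i, f i) := by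
  have h1 : ∀ j : ℕ, k < j → SigmaMem ((j : Ordinal.{w}) + 1) (⋃ i, f i) := by
    intro j hj
    refine SigmaMem.iUnion f (fun _ => (k : Ordinal) + 1) (fun n => ⟨by simp, ?_⟩)
      (fun n => (h n).2)
    exact_mod_cast Nat.succ_lt_succ hj
  refine ⟨h1 _ (by omega), ?_⟩
  have : (⋃ i, f i)ᶜ = ⋃ _ : ℕ, (⋃ i, f i)ᶜ := by
    rw [Set.iUnion_const]
  rw [this]
  refine SigmaMem.iUnion _ (fun _ => ((k + 1 : ℕ) : Ordinal) + 1) (fun n => ⟨by simp, ?_⟩)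
      (fun n => ?_)
  · exact_mod_cast (by omega : k + 1 + 1 < k + 2 + 1)
  · rw [compl_compl]
    exact h1 _ (by omega)

theorem Lev.ex {ι : Type*} [Countable ι] {k : ℕ} {P : ι → Y → Prop}
    (h : ∀ i, Lev.{w, v} k {y | P i y}) : Lev.{w, v} (k + 2) {y | ∃ i, P i y} := by
  rcases isEmpty_or_nonempty ι with hi | hi
  · simpa using Lev.const (k + 2) False
  · obtain ⟨f, hf⟩ := exists_surjective_nat ι
    have := Lev.iUnion_nat (fun i => h (f i))
    convert this using 1
    ext y
    simp [hf.exists]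

theorem Lev.all {ι : Type*} [Countable ι] {k : ℕ} {P : ι → Y → Prop}
    (h : ∀ i, Lev.{w, v} k {y | P i y}) : Lev.{w, v} (k + 2) {y | ∀ i, P i y} := by
  have := (Lev.ex (P := fun i y => ¬ P i y) (fun i => (h i).compl)).compl
  convert this using 1
  ext y; simp

theorem Lev.imp {p : Prop} {k : ℕ} {P : Y → Prop}
    (h : p → Lev.{w, v} k {y | P y}) : Lev.{w, v} k {y | p → P y} := by
  by_cases hp : p
  · simpa [hp] using h hp
  · simpa [hp] using Lev.const k True

theorem sigma_omega {ι : Type*} [Countable ι] [Nonempty ι] {P : ι → Y → Prop}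
    (h : ∀ i, ∃ k, Lev.{w, v} k {y | P i y}) :
    SigmaMem Ordinal.omega0.{w} {y | ∃ i, P i y} := by
  obtain ⟨f, hf⟩ := exists_surjective_nat ι
  choose k hk using h
  have : {y | ∃ i, P i y} = ⋃ n, {y | P (f n) y} := by
    ext y; simp [hf.exists]
  rw [this]
  refine SigmaMem.iUnion _ (fun n => (k (f n) : Ordinal) + 1) (fun n => ⟨by simp, ?_⟩)
    (fun n => (hk (f n)).2)
  exact_mod_cast Ordinal.natCast_lt_omega0 (k (f n) + 1)

end Lev

/-! ### Rectangles -/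

/-- Largeness with a given first threshold. -/
def Th : ℕ → ℕ → (List ℕ → Prop) → Prop
  | 0, _, D => D []
  | d + 1, m, D => ∀ i, m ≤ i → ∀ᶠ l in AEF d, D (i :: l)

theorem Th_ex {d : ℕ} {D : List ℕ → Prop} : (∃ m, Th d m D) ↔ ∀ᶠ l in AEF d, D l := by
  cases d with
  | zero => simp [Th, AEF_zero]
  | succ d => rw [AEF_succ, eventually_atTop]; rfl

/-- `T` contains a rectangle of large sets. -/
def Rect {ι : Type} (d m : ι → ℕ) (T : (ι → List ℕ) → Prop) : Prop :=
  ∃ D : ι → List ℕ → Prop, (∀ n, Th (d n) (m n) (D n)) ∧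
    ∀ s : ι → List ℕ, (∀ n, (s n).length = d n) → (∀ n, D n (s n)) → T s

theorem rect_zero {ι : Type} {d m : ι → ℕ} {T : (ι → List ℕ) → Prop} (hd : ∀ n, d n = 0) :
    Rect d m T ↔ T (fun _ => []) := by
  constructor
  · rintro ⟨D, h1, h2⟩
    refine h2 _ (by simp [hd]) fun n => ?_
    have := h1 n
    rw [hd n] at this
    exact this
  · intro h
    refine ⟨fun _ _ => True, fun n => by rw [hd n]; trivial, fun s hs _ => ?_⟩
    convert h with n
    have := hs n
    rw [hd n] at this
    exact List.length_eq_zero_iff.1 this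

theorem rect_succ {ι : Type} [Fintype ι] [DecidableEq ι] {d m : ι → ℕ}
    {T : (ι → List ℕ) → Prop} (hd : ∃ n, d n ≠ 0) :
    Rect d m T ↔ ∀ n, ∀ i, (d n ≠ 0 ∧ m n ≤ i) → ∃ m',
      Rect (Function.update d n (d n - 1)) (Function.update m n m')
        (fun s => T (Function.update s n (i :: s n))) := by
  constructor
  · rintro ⟨D, h1, h2⟩ n i ⟨hn, hi⟩
    obtain ⟨e, he⟩ := Nat.exists_eq_succ_of_ne_zero hn
    have h3 := h1 n
    rw [he] at h3
    obtain ⟨m', hm'⟩ := Th_ex.2 (h3 i hi)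
    refine ⟨m', Function.update D n (fun l => D n (i :: l)), fun k => ?_, fun s hs hD => ?_⟩
    · by_cases hk : k = n
      · subst hk; simpa [he] using hm'
      · simpa [hk] using h1 k
    · apply h2
      · intro k
        by_cases hk : k = n
        · subst hk
          have := hs k
          simp only [Function.update_self] at this ⊢
          simp [this, he]
        · simpa [hk] using hs k
      · intro k
        have := hD k
        by_cases hk : k = n
        · subst hk
          simpa using this
        · simpa [hk] using this
  · intro h
    have h' : ∀ n i, ∃ E : ι → List ℕ → Prop, (d n ≠ 0 ∧ m n ≤ i) →
        (∀ k, k ≠ n → Th (d k) (m k) (E k)) ∧ (∀ᶠ l in AEF (d n - 1), E n l) ∧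
        ∀ s : ι → List ℕ, (∀ k, k ≠ n → (s k).length = d k) → (s n).length = d n - 1 →
          (∀ k, E k (s k)) → T (Function.update s n (i :: s n)) := by
      intro n i
      by_cases hn : d n ≠ 0 ∧ m n ≤ i
      · obtain ⟨m', E, h1, h2⟩ := h n i hn
        refine ⟨E, fun _ => ⟨fun k hk => ?_, ?_, fun s hs hs' hE => h2 s (fun k => ?_) hE⟩⟩
        · simpa [hk] using h1 k
        · have := h1 n
          simp only [Function.update_self] at this
          exact Th_ex.1 ⟨_, this⟩
        · by_cases hk : k = n
          · subst hk; simpa using hs'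
          · simpa [hk] using hs k hk
      · exact ⟨fun _ _ => True, fun h => absurd h hn⟩
    choose E hE using h'
    let D : ι → List ℕ → Prop := fun k l => ∀ i l', l = i :: l' →
      (m k ≤ i ∧ E k i k l' ∧
        ∀ n, ∀ i' ∈ Set.Iic i, n ≠ k → d n ≠ 0 → m n ≤ i' → E n i' k (i :: l'))
    refine ⟨D, fun k => ?_, fun s hs hD => ?_⟩
    · rcases hk : d k with _ | e
      · intro i l' hl; cases hl
      · intro i hi
        have a1 : ∀ᶠ l in AEF e, E k i k l := by
          have := (hE k i ⟨by omega, hi⟩).2.1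
          simpa [hk] using this
        have a2 : ∀ᶠ l in AEF e, ∀ n, ∀ i' ∈ Set.Iic i, n ≠ k → d n ≠ 0 → m n ≤ i' →
            E n i' k (i :: l) := by
          rw [eventually_all]
          intro n
          rw [eventually_all_finite (Set.finite_Iic i)]
          intro i' _
          by_cases hc : n ≠ k ∧ d n ≠ 0 ∧ m n ≤ i'
          · have := (hE n i' hc.2).1 k hc.1.symm
            rw [hk] at this
            filter_upwards [this i hi] with l hl _ _ _ using hl
          · exact Eventually.of_forall fun l x y z => absurd ⟨x, y, z⟩ hc
        filter_upwards [a1, a2] with l h1 h2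
        intro j l' hl
        cases hl
        exact ⟨hi, h1, h2⟩
    · obtain ⟨n0, hn0⟩ := hd
      obtain ⟨n, hn, hmin⟩ := Finset.exists_min_image
        (Finset.univ.filter fun n => d n ≠ 0) (fun n => (s n).headD 0) ⟨n0, by simpa using hn0⟩
      simp only [Finset.mem_filter, Finset.mem_univ, true_and] at hn hmin
      rcases hsn : s n with _ | ⟨i, l'⟩
      · have := hs n
        rw [hsn] at this
        exact absurd this.symm hn
      have hDn := hD n i l' hsn
      have hEn := hE n i ⟨hn, hDn.1⟩
      have key := hEn.2.2 (Function.update s n l') (fun k hk => by simpa [hk] using hs k)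
        (by have := hs n; rw [hsn] at this; simp at this ⊢; omega) (fun k => ?_)
      · convert key using 1
        simp only [Function.update_self, Function.update_idem]
        rw [← hsn, Function.update_eq_self]
      · by_cases hk : k = n
        · subst hk; simpa using hDn.2.1
        · rw [Function.update_of_ne hk]
          rcases hsk : s k with _ | ⟨j, l2⟩
          · have h0 := hs k
            rw [hsk] at h0
            have := hEn.1 k hk
            rw [← h0] at this
            exact this
          · have hdk : d k ≠ 0 := by
              rw [← hs k, hsk]; simp
            have hm := hmin k hdk
            rw [hsn, hsk] at hm
            exact (hD k j l2 hsk).2.2 n i hm (Ne.symm hk) hn hDn.1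

theorem rect_lev.{w, v} {Y : Type v} [TopologicalSpace Y] {ι : Type} [Fintype ι] (N k : ℕ) :
    ∀ (d m : ι → ℕ) (T : Y → (ι → List ℕ) → Prop), ∑ n, d n = N →
      (∀ s, Lev.{w, v} k {y | T y s}) → Lev.{w, v} (k + 6 * N) {y | Rect d m (T y)} := by
  classical
  induction N with
  | zero =>
    intro d m T hd hT
    have hd' : ∀ n, d n = 0 := by simpa using hd
    simpa [rect_zero hd'] using hT _
  | succ N ih =>
    intro d m T hd hT
    have hd' : ∃ n, d n ≠ 0 := by
      by_contra hc
      push Not at hc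
      simp [hc] at hd
    simp only [rect_succ hd']
    have : k + 6 * (N + 1) = k + 6 * N + 2 + 2 + 2 := by ring
    rw [this]
    refine Lev.all fun n => Lev.all fun i => Lev.imp fun hn => Lev.ex fun m' => ?_
    refine ih _ _ (fun y s => T y (Function.update s n (i :: s n))) ?_ fun s => hT _
    rw [Finset.sum_update_of_mem (Finset.mem_univ n)]
    rw [← Finset.add_sum_erase _ _ (Finset.mem_univ n), Finset.erase_eq] at hd
    omega

/-! ### The ideal -/

/-- Coded form of the ideal. -/
def FP (c : ℕ → ℕ → List ℕ) (n : ℕ) (B : Set ℕ) : Prop :=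
  ∀ᶠ l in AEF (n + 1), {e | e ∈ B ∧ c n e = l}.Finite

/-- Coded form of the generated ideal. -/
def Gen (c : ℕ → ℕ → List ℕ) (N : ℕ) (A : Set ℕ) : Prop :=
  ∃ B : ℕ → Set ℕ, (∀ n, FP c n (B n)) ∧ ∀ e ∈ A, ∃ n, n ≤ N ∧ e ∈ B n

theorem FP.mono {c : ℕ → ℕ → List ℕ} {n : ℕ} {A B : Set ℕ} (h : FP c n B) (hAB : A ⊆ B) :
    FP c n A := by
  filter_upwards [h] with l hl
  exact hl.subset fun e he => ⟨hAB he.1, he.2⟩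

theorem FP.union {c : ℕ → ℕ → List ℕ} {n : ℕ} {A B : Set ℕ} (h : FP c n A) (h' : FP c n B) :
    FP c n (A ∪ B) := by
  filter_upwards [h, h'] with l hl hl'
  refine (hl.union hl').subset ?_
  rintro e ⟨he | he, h2⟩
  · exact Or.inl ⟨he, h2⟩
  · exact Or.inr ⟨he, h2⟩

theorem FP.finite {c : ℕ → ℕ → List ℕ} {n : ℕ} {A : Set ℕ} (h : A.Finite) : FP c n A :=
  Eventually.of_forall fun _ => h.subset fun _ he => he.1

theorem gen_iff (c : ℕ → ℕ → List ℕ) (hc : ∀ n e, (c n e).length = n + 1) (N : ℕ) (A : Set ℕ) :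
    Gen c N A ↔ ∃ m : Fin (N + 1) → ℕ, Rect (fun n : Fin (N + 1) => (n : ℕ) + 1) m
      (fun s => {e | e ∈ A ∧ ∀ n : Fin (N + 1), c n e = s n}.Finite) := by
  constructor
  · rintro ⟨B, hB, hA⟩
    have : ∀ n : Fin (N + 1), ∃ m, Th ((n : ℕ) + 1) m (fun l => {e | e ∈ B n ∧ c n e = l}.Finite) :=
      fun n => Th_ex.2 (hB n)
    choose m hm using this
    refine ⟨m, fun n l => {e | e ∈ B n ∧ c n e = l}.Finite, hm, fun s _ hs => ?_⟩
    refine (Set.finite_iUnion hs).subset ?_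
    rintro e ⟨he, hes⟩
    obtain ⟨n, hn, hb⟩ := hA e he
    exact Set.mem_iUnion.2 ⟨⟨n, by omega⟩, hb, hes ⟨n, by omega⟩⟩
  · rintro ⟨m, D, hD, hT⟩
    let D' : ℕ → List ℕ → Prop := fun n l => ∀ h : n < N + 1, D ⟨n, h⟩ l
    refine ⟨fun n => {e | ¬ D' n (c n e)} ∪ {e | e ∈ A ∧ n < N + 1 ∧
      (∀ k : Fin (N + 1), D k (c k e)) ∧
      ∀ k : Fin (N + 1), Encodable.encode (c k e) ≤ Encodable.encode (c n e)}, fun n => ?_, ?_⟩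
    · have hev : ∀ᶠ l in AEF (n + 1), D' n l := by
        by_cases hn : n < N + 1
        · filter_upwards [Th_ex.1 ⟨_, hD ⟨n, hn⟩⟩] with l hl h using hl
        · exact Eventually.of_forall fun l h => absurd h hn
      unfold FP
      filter_upwards [hev] with l hl
      have hfin : {s : Fin (N + 1) → List ℕ |
          ∀ k, s k ∈ {l' : List ℕ | Encodable.encode l' ≤ Encodable.encode l}}.Finite := by
        refine Set.Finite.pi' fun k => ?_
        exact (Set.finite_Iic (Encodable.encode l)).preimage Encodable.encode_injective.injOn
      have hfin2 := Set.Finite.subset hfin (t := {s : Fin (N + 1) → List ℕ |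
          (∀ k, Encodable.encode (s k) ≤ Encodable.encode l) ∧
          (∀ k, (s k).length = (k : ℕ) + 1) ∧ ∀ k, D k (s k)}) (fun s hs => hs.1)
      refine (hfin2.biUnion fun s hs => hT s hs.2.1 hs.2.2).subset ?_
      rintro e ⟨he | he, hel⟩
      · exact absurd (hel ▸ hl) he
      · obtain ⟨h1, h2, h3, h4⟩ := he
        rw [hel] at h4
        simp only [Set.mem_iUnion]
        exact ⟨fun k => c k e, ⟨h4, fun k => hc _ _, h3⟩, h1, fun _ => rfl⟩
    · intro e he
      by_cases hall : ∀ k : Fin (N + 1), D k (c k e)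
      · obtain ⟨n, hn⟩ := Finite.exists_max (fun k : Fin (N + 1) => Encodable.encode (c k e))
        exact ⟨n, by omega, Or.inr ⟨he, n.2, hall, hn⟩⟩
      · push Not at hall
        obtain ⟨k, hk⟩ := hall
        exact ⟨k, by omega, Or.inl fun h => hk (h k.2)⟩

theorem gen_lev (c : ℕ → ℕ → List ℕ) (hc : ∀ n e, (c n e).length = n + 1) :
    SigmaMem Ordinal.omega0 {x : ℕ → Bool | ∃ N, Gen c N {e | x e = true}} := by
  have : {x : ℕ → Bool | ∃ N, Gen c N {e | x e = true}} =
      {x | ∃ q : (Σ N : ℕ, (Fin (N + 1) → ℕ)), Rect (fun n : Fin (q.1 + 1) => (n : ℕ) + 1) q.2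
      (fun s => {e | x e = true ∧ ∀ n : Fin (q.1 + 1), c n e = s n}.Finite)} := by
    ext x
    simp only [Set.mem_ofPred_eq, gen_iff c hc, Sigma.exists]
  rw [this]
  refine sigma_omega fun q => ⟨_, rect_lev _ 4 _ _ _ rfl fun s => ?_⟩
  have h2 : {x : ℕ → Bool | {e | x e = true ∧ ∀ n : Fin (q.1 + 1), c n e = s n}.Finite} =
      {x | ∃ b : ℕ, ∀ e : ℕ, (b < e ∧ ∀ n : Fin (q.1 + 1), c n e = s n) → x e = false} := by
    ext x
    simp only [Set.mem_ofPred_eq]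
    rw [Set.finite_iff_bddAbove]
    constructor
    · rintro ⟨b, hb⟩
      refine ⟨b, fun e he => ?_⟩
      by_contra hx
      have := hb (show e ∈ {e | _} from ⟨by simpa using hx, he.2⟩)
      omega
    · rintro ⟨b, hb⟩
      refine ⟨b, fun e he => ?_⟩
      by_contra hx
      have := hb e ⟨by omega, he.2⟩
      rw [he.1] at this
      cases this
  rw [h2]
  refine Lev.ex (k := 2) fun b => Lev.all (k := 0) fun e => Lev.imp fun _ => Lev.clopen _ ?_
  exact (isClopen_discrete {false}).preimage (continuous_apply e)

/-! ### Lower bound -/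

theorem approx {α : Ordinal} {S : Set (ℕ → Bool)} (h : SigmaMem α S) :
    ∀ k : ℕ, α ≤ (k : Ordinal) + 1 → ∃ g : List ℕ → ℕ → (ℕ → Bool) → Prop,
      (∀ l e x y, (∀ i < e, x i = y i) → g l e x → g l e y) ∧
      ∀ x, (x ∈ S → ∀ᶠ l in AEF k, ∀ᶠ e in atTop, g l e x) ∧
        (x ∉ S → ∀ᶠ l in AEF k, ∀ᶠ e in atTop, ¬ g l e x) := by
  induction h with
  | @isOpen α h1 s hs =>
    intro k _
    refine ⟨fun _ e x => ∀ y, (∀ i < e, x i = y i) → y ∈ s, ?_, fun x => ⟨fun hx => ?_, fun hx => ?_⟩⟩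
    · intro l e x y hxy hg z hz
      exact hg z fun i hi => (hxy i hi).trans (hz i hi)
    · refine Eventually.of_forall fun l => ?_
      obtain ⟨I, u, hu, hsub⟩ := isOpen_pi_iff.1 hs x hx
      filter_upwards [eventually_gt_atTop (I.sup id)] with e he y hy
      apply hsub
      intro i hi
      rw [← hy i (lt_of_le_of_lt (Finset.le_sup (f := id) hi) he)]
      exact (hu i hi).2
    · exact Eventually.of_forall fun l => Eventually.of_forall fun e hg => hx (hg x fun _ _ => rfl)
  | @iUnion α f o hg hf ih =>
    intro k hk
    rcases k with _ | k
    · have := lt_of_le_of_lt (hg 0).1 ((hg 0).2.trans_le hk)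
      simp at this
    · have : ∀ n, o n ≤ (k : Ordinal) + 1 := by
        intro n
        have := (hg n).2.trans_le hk
        rw [← Order.succ_eq_add_one, Order.lt_succ_iff] at this
        simpa using this
      choose g h1 h2 using fun n => ih n k (this n)
      refine ⟨fun l e x => ∃ j ≤ l.headD 0, ¬ g j l.tail e x, ?_, fun x => ⟨fun hx => ?_, fun hx => ?_⟩⟩
      · rintro l e x y hxy ⟨j, hj, hn⟩
        exact ⟨j, hj, fun hy => hn (h1 j _ e y x (fun i hi => (hxy i hi).symm) hy)⟩
      · obtain ⟨j, hj⟩ := Set.mem_iUnion.1 hx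
        rw [AEF_succ]
        filter_upwards [eventually_ge_atTop j] with i hi
        filter_upwards [(h2 j x).2 (by simpa using hj)] with l hl
        filter_upwards [hl] with e he
        exact ⟨j, hi, he⟩
      · rw [AEF_succ]
        refine Eventually.of_forall fun i => ?_
        have : ∀ᶠ l in AEF k, ∀ j ∈ Set.Iic i, ∀ᶠ e in atTop, g j l e x := by
          rw [eventually_all_finite (Set.finite_Iic i)]
          intro j _
          exact (h2 j x).1 fun hj => hx (Set.mem_iUnion.2 ⟨j, hj⟩)
        filter_upwards [this] with l hl
        rw [← eventually_all_finite (Set.finite_Iic i)] at hl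
        filter_upwards [hl] with e he
        rintro ⟨j, hj, hn⟩
        exact hn (he j hj)

/-- Fixed point of a contraction of Cantor space. -/
def fixPt (G : ℕ → (ℕ → Bool) → Bool) (e : ℕ) : Bool :=
  G e (fun i => if _h : i < e then fixPt G i else false)
termination_by e

theorem exists_fix (G : ℕ → (ℕ → Bool) → Bool)
    (hG : ∀ e x y, (∀ i < e, x i = y i) → G e x = G e y) : ∃ x, ∀ e, x e = G e x := by
  refine ⟨fixPt G, fun e => ?_⟩
  rw [fixPt]
  exact hG e _ _ fun i hi => by simp [hi]

theorem no_sep (c : ℕ → ℕ → List ℕ) (n : ℕ) {α : Ordinal} (hα : α ≤ ((n + 1 : ℕ) : Ordinal) + 1)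
    (S : Set (ℕ → Bool)) (hS : SigmaMem α S)
    (h1 : ∀ x : ℕ → Bool, FP c n {e | x e = true} → x ∈ S)
    (h2 : ∀ x : ℕ → Bool, FP c n {e | x e = true}ᶜ → x ∉ S) : False := by
  classical
  obtain ⟨g, hg, hx⟩ := approx hS (n + 1) hα
  obtain ⟨x, hfix⟩ := exists_fix (fun e x => decide (g (c n e) e x)) (fun e x y hxy => by
    have : g (c n e) e x ↔ g (c n e) e y :=
      ⟨hg _ _ _ _ hxy, hg _ _ _ _ fun i hi => (hxy i hi).symm⟩
    simp [this])
  have fin : ∀ {p : ℕ → Prop} {q : ℕ → Prop}, (∀ᶠ e in atTop, q e) → (∀ e, p e → ¬ q e) →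
      {e | p e}.Finite := by
    intro p q hq hpq
    rw [← Nat.cofinite_eq_atTop, eventually_cofinite] at hq
    exact hq.subset hpq
  by_cases hxS : x ∈ S
  · refine h2 x ?_ hxS
    unfold FP
    filter_upwards [(hx x).1 hxS] with l hl
    refine fin hl ?_
    rintro e ⟨he, rfl⟩ hge
    apply he
    have := hfix e
    simp [hge] at this
    exact this
  · refine hxS (h1 x ?_)
    unfold FP
    filter_upwards [(hx x).2 hxS] with l hl
    refine fin hl ?_
    rintro e ⟨he, rfl⟩ hge
    have := hfix e
    simp [hge] at this
    simp [this] at he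

theorem exists_code (X : (n : ℕ) → (Fin (n + 1) → ℕ) → Set ℕ) (hX : PartitionSystem X) :
    ∃ c : ℕ → ℕ → List ℕ, (∀ n e, (c n e).length = n + 1) ∧
      (∀ n B, B ∈ FinPowCopy (X n) ↔ FP c n B) ∧
      (∀ N (s : ℕ → List ℕ), (∀ n, (s n).length = n + 1) →
        {e | ∀ n ≤ N, c n e = s n}.Infinite) := by
  have : ∀ n e, ∃ s, e ∈ X n s := fun n e => by
    have : e ∈ ⋃ s, X n s := by rw [hX.cover]; trivial
    simpa using this
  choose σ hσ using this
  have hmem : ∀ n e s, e ∈ X n s ↔ List.ofFn (σ n e) = List.ofFn s := by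
    intro n e s
    rw [List.ofFn_inj]
    constructor
    · intro h
      by_contra hne
      exact Set.disjoint_left.1 (hX.disjoint n _ _ hne) (hσ n e) h
    · rintro rfl; exact hσ n e
  refine ⟨fun n e => List.ofFn (σ n e), fun n e => by simp, fun n B => ?_, fun N s hs => ?_⟩
  · unfold FP
    rw [← finPow_iff]
    unfold FinPowCopy
    have : ∀ s, B ∩ X n s = {e | e ∈ B ∧ List.ofFn (σ n e) = List.ofFn s} := by
      intro s; ext e; simp only [Set.mem_inter_iff, hmem, Set.mem_ofPred_eq]
    simp only [this, Set.mem_ofPred_eq]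
  · have : ∀ n, ∃ t : Fin (n + 1) → ℕ, List.ofFn t = s n := fun n => by
      refine ⟨fun i => (s n).get (i.cast (hs n).symm), ?_⟩
      apply List.ext_get
      · simp [hs]
      · intro i h1 h2
        simp only [List.get_eq_getElem, List.getElem_ofFn, Fin.val_cast]
    choose t ht using this
    refine (hX.cross (Finset.range (N + 1)) t).mono ?_
    intro e he n hn
    simp only [Set.mem_iInter] at he
    have := (hmem n e (t n)).1 (he n (by simp; omega))
    exact this.trans (ht n)

theorem finOmega_iff (X : (n : ℕ) → (Fin (n + 1) → ℕ) → Set ℕ) (c : ℕ → ℕ → List ℕ)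
    (hc : ∀ n B, B ∈ FinPowCopy (X n) ↔ FP c n B) (A : Set ℕ) :
    A ∈ FinOmega' X ↔ ∃ N, Gen c N A := by
  classical
  constructor
  · rintro ⟨F, B, hB, hA⟩
    refine ⟨F.sup id, fun n => if n ∈ F then B n else ∅, fun n => ?_, fun e he => ?_⟩
    · by_cases hn : n ∈ F
      · simpa [hn] using (hc n _).1 (hB n hn)
      · simpa [hn] using FP.finite (c := c) (n := n) Set.finite_empty
    · have := hA he
      simp only [Set.mem_iUnion] at this
      obtain ⟨n, hn, h⟩ := this
      exact ⟨n, Finset.le_sup (f := id) hn, by simpa [hn] using h⟩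
  · rintro ⟨N, B, hB, hA⟩
    refine ⟨Finset.range (N + 1), B, fun n _ => (hc n _).2 (hB n), fun e he => ?_⟩
    obtain ⟨n, hn, h⟩ := hA e he
    simp only [Set.mem_iUnion]
    exact ⟨n, by simp; omega, h⟩

theorem Gen.union {c : ℕ → ℕ → List ℕ} {N M : ℕ} {A B : Set ℕ} (h : Gen c N A) (h' : Gen c M B) :
    Gen c (max N M) (A ∪ B) := by
  obtain ⟨U, hU, hA⟩ := h
  obtain ⟨V, hV, hB⟩ := h'
  refine ⟨fun n => U n ∪ V n, fun n => (hU n).union (hV n), ?_⟩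
  rintro e (he | he)
  · obtain ⟨n, hn, h⟩ := hA e he
    exact ⟨n, le_max_of_le_left hn, Or.inl h⟩
  · obtain ⟨n, hn, h⟩ := hB e he
    exact ⟨n, le_max_of_le_right hn, Or.inr h⟩

theorem Gen.of_FP {c : ℕ → ℕ → List ℕ} {n : ℕ} {A : Set ℕ} (h : FP c n A) : Gen c n A := by
  classical
  refine ⟨fun k => if k = n then A else ∅, fun k => ?_, fun e he => ⟨n, le_rfl, by simpa using he⟩⟩
  by_cases hk : k = n
  · subst hk; simpa using h
  · simpa [hk] using FP.finite (c := c) (n := k) Set.finite_empty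

theorem Gen.not_univ {c : ℕ → ℕ → List ℕ}
    (hc : ∀ N (s : ℕ → List ℕ), (∀ n, (s n).length = n + 1) →
        {e | ∀ n ≤ N, c n e = s n}.Infinite) {N : ℕ} : ¬ Gen c N Set.univ := by
  rintro ⟨B, hB, hA⟩
  choose s hs using fun n => AEF_exists ((hB n).and (AEF_length (n + 1)))
  refine hc N s (fun n => (hs n).2) ?_
  refine ((Set.finite_Iic N).biUnion fun n _ => (hs n).1).subset ?_
  intro e he
  obtain ⟨n, hn, h⟩ := hA e trivial
  simp only [Set.mem_iUnion]
  exact ⟨n, hn, h, he n hn⟩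

end Helpers

/-- `Fin'_ω` is an ideal which is a `Σ⁰_ω` subset of `2^ω`,
and its Borel separation rank equals `ω`. -/
theorem finOmega'_sigmaOmega_and_rank (X : (n : ℕ) → (Fin (n + 1) → ℕ) → Set ℕ)
    (hX : PartitionSystem X) :
    (∃ K : IdealOn ℕ, K.sets = FinOmega' X) ∧
    SigmaMem Ordinal.omega0 (chSet (FinOmega' X)) ∧
    RankLE (FinOmega' X) Ordinal.omega0 ∧
    (∀ α : Ordinal, α < Ordinal.omega0 → ¬ RankLE (FinOmega' X) α) := by
  obtain ⟨c, hlen, hFP, hcross⟩ := exists_code X hX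
  have hiff := finOmega_iff X c hFP
  have hnu : Set.univ ∉ FinOmega' X := by
    rw [hiff]
    rintro ⟨N, hN⟩
    exact Gen.not_univ hcross hN
  have hun : ∀ ⦃A B : Set ℕ⦄, A ∈ FinOmega' X → B ∈ FinOmega' X → A ∪ B ∈ FinOmega' X := by
    intro A B hA hB
    rw [hiff] at hA hB ⊢
    obtain ⟨N, hN⟩ := hA
    obtain ⟨M, hM⟩ := hB
    exact ⟨_, hN.union hM⟩
  refine ⟨⟨⟨FinOmega' X, ?_, hun, ?_, hnu⟩, rfl⟩, ?_, ?_, ?_⟩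
  · rintro A B ⟨F, U, hU, hA⟩ hBA
    exact ⟨F, U, hU, hBA.trans hA⟩
  · intro A hA
    rw [hiff]
    exact ⟨0, Gen.of_FP (FP.finite hA)⟩
  · have := gen_lev c hlen
    simp only [← hiff] at this
    exact this
  · refine ⟨chSet (FinOmega' X), ?_, subset_rfl, ?_⟩
    · rw [Ordinal.one_add_omega0]
      have := gen_lev c hlen
      simp only [← hiff] at this
      exact this
    · ext x
      simp only [Set.mem_inter_iff, Set.mem_empty_iff_false, iff_false, not_and]
      intro h1 h2
      apply hnu
      have := hun h1 h2
      rwa [Set.compl_union_self] at this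
  · rintro α hα ⟨S, hS, h1, h2⟩
    obtain ⟨n, rfl⟩ := Ordinal.lt_omega0.1 hα
    refine no_sep c n ?_ S hS (fun x hx => ?_) (fun x hx hxS => ?_)
    · exact_mod_cast (by omega : 1 + n ≤ n + 1 + 1)
    · apply h1
      exact (hiff _).2 ⟨n, Gen.of_FP hx⟩
    · have : x ∈ chSet (dualFam (FinOmega' X)) ∩ S :=
        ⟨(hiff _).2 ⟨n, Gen.of_FP hx⟩, hxS⟩
      rw [h2] at this
      exact this
end

section
/- The ideal Fin_ω does not embed isomorphically into Fin'_ω: there is no bijection f : ω → ∑_{i>0} ω^i such that f⁻¹[A] ∈ Fin'_ω for all A ∈ Fin_ω. -/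
namespace FinOmegaAux

open Filter Set

abbrev D := Σ n : ℕ, Fin (n + 1) → ℕ

/-- The dual filter of `FinPow n`. -/
def FF : (n : ℕ) → Filter (Fin (n + 1) → ℕ)
  | 0 => cofinite
  | n + 1 => Filter.bind cofinite
      (fun k : ℕ => Filter.map (fun y : Fin (n + 1) → ℕ => (Fin.cons k y : Fin (n + 2) → ℕ)) (FF n))

lemma eventually_succ {n : ℕ} {p : (Fin (n + 2) → ℕ) → Prop} :
    (∀ᶠ s in FF (n + 1), p s) ↔ ∀ᶠ k in (cofinite : Filter ℕ), ∀ᶠ y in FF n, p (Fin.cons k y) := by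
  rfl

lemma mem_FinPow (n : ℕ) (A : Set (Fin (n + 1) → ℕ)) :
    A ∈ FinPow n ↔ ∀ᶠ s in FF n, s ∉ A := by
  induction n with
  | zero =>
    show A.Finite ↔ Set.Finite _
    have : {x : Fin (0 + 1) → ℕ | x ∉ A}ᶜ = A := by
      ext x
      exact not_not
    rw [this]
  | succ n ih =>
    rw [eventually_succ]
    show Set.Finite _ ↔ Set.Finite _
    have : {k : ℕ | {y : Fin (n + 1) → ℕ | (Fin.cons k y : Fin (n + 2) → ℕ) ∈ A} ∉ FinPow n}
      = {k : ℕ | ∀ᶠ y in FF n, (Fin.cons k y : Fin (n + 2) → ℕ) ∉ A}ᶜ := by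
      ext k
      simp only [mem_ofPred_eq, mem_compl_iff, ih]
    rw [this]

lemma FF_neBot (n : ℕ) : (FF n).NeBot := by
  induction n with
  | zero => exact (inferInstance : (cofinite : Filter (Fin 1 → ℕ)).NeBot)
  | succ n ih =>
    rw [← Filter.frequently_true_iff_neBot]
    intro h
    rw [eventually_succ] at h
    obtain ⟨k, hk⟩ := h.exists
    obtain ⟨y, hy⟩ := hk.exists
    exact hy trivial

/-- Dual of the `m`-th approximation of `FinOmega`. -/
def JJ (m : ℕ) : Filter D where
  sets := {U | ∃ P ∈ FF m, ∀ (n : ℕ) (h : m ≤ n), ∀ x : Fin (n + 1) → ℕ,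
      lastProj (Nat.succ_le_succ h) x ∈ P → (⟨n, x⟩ : D) ∈ U}
  univ_sets := ⟨univ, univ_mem, fun _ _ _ _ => trivial⟩
  sets_of_superset := by
    rintro U V ⟨P, hP, h⟩ hUV
    exact ⟨P, hP, fun n hn x hx => hUV (h n hn x hx)⟩
  inter_sets := by
    rintro U V ⟨P, hP, h⟩ ⟨Q, hQ, h'⟩
    exact ⟨P ∩ Q, inter_mem hP hQ, fun n hn x hx => ⟨h n hn x hx.1, h' n hn x hx.2⟩⟩

lemma compl_mem_FinOmega {m : ℕ} {U : Set D} (h : U ∈ JJ m) : Uᶜ ∈ FinOmega := by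
  obtain ⟨P, hP, h⟩ := h
  refine ⟨m, P, ?_, fun n hn x hx hc => hc (h n hn x hx)⟩
  rw [mem_FinPow]
  filter_upwards [hP] with s hs hc using hc hs

/-- the `m`-th coordinate from the end (meaningful if `m ≤ x.1`) -/
def lam (m : ℕ) (x : D) : ℕ := x.2 ⟨x.1 - m, by omega⟩

lemma JJ_succ {m : ℕ} {U : Set D}
    (h : ∀ᶠ e in (cofinite : Filter ℕ), {x : D | m + 1 ≤ x.1 ∧ lam (m + 1) x = e → x ∈ U} ∈ JJ m) :
    U ∈ JJ (m + 1) := by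
  have h1 : ∀ e : ℕ, ∃ P : Set (Fin (m + 1) → ℕ),
      {x : D | m + 1 ≤ x.1 ∧ lam (m + 1) x = e → x ∈ U} ∈ JJ m →
      P ∈ FF m ∧ ∀ (n : ℕ) (h : m ≤ n), ∀ x : Fin (n + 1) → ℕ,
      lastProj (Nat.succ_le_succ h) x ∈ P →
        (m + 1 ≤ n ∧ lam (m + 1) ⟨n, x⟩ = e → (⟨n, x⟩ : D) ∈ U) := by
    intro e
    by_cases he : {x : D | m + 1 ≤ x.1 ∧ lam (m + 1) x = e → x ∈ U} ∈ JJ m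
    · obtain ⟨P, hP, hh⟩ := he
      exact ⟨P, fun _ => ⟨hP, hh⟩⟩
    · exact ⟨univ, fun h => absurd h he⟩
  choose P hP using h1
  refine ⟨{z | {x : D | m + 1 ≤ x.1 ∧ lam (m + 1) x = z 0 → x ∈ U} ∈ JJ m ∧
    Fin.tail z ∈ P (z 0)}, ?_, ?_⟩
  · show ∀ᶠ z in FF (m + 1), _
    rw [eventually_succ]
    filter_upwards [h] with k hk
    filter_upwards [(hP k hk).1] with y hy
    refine ⟨by simpa using hk, by simpa using hy⟩
  · rintro n hn x ⟨hx1, hx2⟩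
    have e0 : lam (m + 1) ⟨n, x⟩ = lastProj (Nat.succ_le_succ hn) x 0 := by
      unfold lam lastProj
      congr 1
      simp
    refine (hP _ hx1).2 n (by omega) x ?_ ⟨hn, e0⟩
    convert hx2 using 1
    funext k
    unfold Fin.tail lastProj
    congr 1
    ext
    simp
    omega

lemma gt_mem_JJ (m e : ℕ) : {x : D | m + 1 ≤ x.1 ∧ e < lam (m + 1) x} ∈ JJ (m + 1) := by
  apply JJ_succ
  have : ∀ᶠ e' in (cofinite : Filter ℕ), e < e' := by
    rw [Nat.cofinite_eq_atTop]; exact eventually_gt_atTop e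
  filter_upwards [this] with e' he'
  apply Filter.univ_mem'
  rintro x ⟨h1, h2⟩
  exact ⟨h1, by omega⟩

lemma finite_compl_mem_JJ {T : Set D} (hT : T.Finite) : Tᶜ ∈ JJ 0 := by
  refine ⟨((fun x : D => (fun _ => lam 0 x : Fin 1 → ℕ)) '' T)ᶜ, ?_, ?_⟩
  · show _ ∈ cofinite
    exact (hT.image _).compl_mem_cofinite
  · intro n hn x hx hxT
    apply hx
    refine ⟨_, hxT, ?_⟩
    funext k
    unfold lam lastProj
    congr 1
    simp

lemma step {α : Type} [Countable α] {m : ℕ} (L : α → Filter D)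
    (hL : ∀ U ∈ JJ (m + 1), ∀ᶠ a in cofinite, U ∈ L a) :
    ∀ᶠ a in cofinite, L a ≤ JJ m := by
  classical
  obtain ⟨c, hc⟩ := Countable.exists_injective_nat α
  set dfn : Set D := {x : D | m + 1 ≤ x.1} with hdfn
  have hd : ∀ᶠ a in cofinite, dfn ∈ L a := by
    filter_upwards [hL _ (gt_mem_JJ m 0)] with a ha
    filter_upwards [ha] with x hx using hx.1
  by_contra hcon
  have h1 : ∀ a, ∃ U ∈ JJ m, ¬ L a ≤ JJ m → U ∉ L a := by
    intro a
    by_cases h : L a ≤ JJ m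
    · exact ⟨univ, univ_mem, fun h' => absurd h h'⟩
    · obtain ⟨U, hU, hU'⟩ := Filter.not_le.1 h
      exact ⟨U, hU, fun _ => hU'⟩
  choose U hU hUL using h1
  have h2 : ∀ a, ∃ e : ℕ, (∃ e, {x | m + 1 ≤ x.1 ∧ lam (m + 1) x = e → x ∈ U a} ∉ L a) ∧
        {x | m + 1 ≤ x.1 ∧ lam (m + 1) x = e → x ∈ U a} ∉ L a ∨
      (∀ e, {x | m + 1 ≤ x.1 ∧ lam (m + 1) x = e → x ∈ U a} ∈ L a) ∧ e = c a := by
    intro a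
    by_cases h : ∃ e, {x | m + 1 ≤ x.1 ∧ lam (m + 1) x = e → x ∈ U a} ∉ L a
    · obtain ⟨e, he⟩ := h
      exact ⟨e, Or.inl ⟨⟨e, he⟩, he⟩⟩
    · push Not at h
      exact ⟨c a, Or.inr ⟨h, rfl⟩⟩
  choose e he using h2
  have hfin : ∀ b : ℕ, {a | e a ≤ b}.Finite := by
    intro b
    have hb := hL _ (gt_mem_JJ m b)
    have hb2 : {a | c a ≤ b}.Finite := (Set.finite_Iic b).preimage hc.injOn
    refine ((Filter.eventually_cofinite.1 hb).union hb2).subset ?_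
    intro a ha
    rcases he a with ⟨-, h⟩ | ⟨-, h⟩
    · left
      intro hmem
      apply h
      filter_upwards [hmem] with x hx hx'
      have := hx.2
      have := hx'.2
      have : e a ≤ b := ha
      omega
    · right
      show c a ≤ b
      rw [← h]; exact ha
  set V : Set D := {x | ∀ a, (m + 1 ≤ x.1 ∧ e a ≤ lam (m + 1) x) → x ∈ U a} with hV
  have hVJ : V ∈ JJ (m + 1) := by
    apply JJ_succ
    refine Filter.Eventually.of_forall fun b => ?_
    have := (Filter.biInter_mem (hfin b) (f := JJ m) (s := U)).2 (fun a _ => hU a)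
    filter_upwards [this] with x hx hxb a hxa
    simp only [mem_iInter] at hx
    exact hx a (by show e a ≤ b; omega)
  apply hcon
  filter_upwards [hL V hVJ, hd] with a hVa hda
  by_contra hna
  rcases he a with ⟨-, h⟩ | ⟨h, h'⟩
  · apply h
    filter_upwards [hVa] with x hx hxe
    exact hx a ⟨hxe.1, hxe.2.ge⟩
  · apply hUL a hna
    have := (Filter.biInter_mem (Set.finite_Iio (e a)) (f := L a)
      (s := fun b => {x | m + 1 ≤ x.1 ∧ lam (m + 1) x = b → x ∈ U a})).2 (fun b _ => h b)
    filter_upwards [this, hVa, hda] with x hx hxV hxd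
    simp only [mem_iInter] at hx
    by_cases hlt : lam (m + 1) x < e a
    · exact hx _ hlt ⟨hxd, rfl⟩
    · exact hxV a ⟨hxd, by omega⟩

lemma multi_step {m : ℕ} (n : ℕ) (L : (Fin (n + 1) → ℕ) → Filter D)
    (hL : ∀ U ∈ JJ (m + n + 1), ∀ᶠ s in FF n, U ∈ L s) :
    ∀ᶠ s in FF n, L s ≤ JJ m := by
  induction n with
  | zero => exact step L hL
  | succ n ih =>
    rw [eventually_succ]
    have := step (m := m + n + 1) (fun k : ℕ => Filter.bind (FF n)
      (fun y => L (Fin.cons k y))) (fun U hU => eventually_succ.1 (hL U hU))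
    filter_upwards [this] with k hk
    exact ih _ (fun U hU => hk hU)

section cells

variable (X : (n : ℕ) → (Fin (n + 1) → ℕ) → Set ℕ)

def AllP : (j r : ℕ) → (Z : Set ℕ) → (Φ : Set ℕ → Prop) → Prop
  | 0, _, Z, Φ => Φ Z
  | j + 1, r, Z, Φ => ∀ᶠ s in FF r, AllP j (r + 1) (Z ∩ X r s) Φ

def Cells : ℕ → Set (Set ℕ)
  | 0 => {univ}
  | r + 1 => Set.image2 (fun Z s => Z ∩ X r s) (Cells r) univ

variable {X}

lemma AllP_mono {j r : ℕ} {Z : Set ℕ} {Φ Ψ : Set ℕ → Prop} (h : ∀ Z, Φ Z → Ψ Z)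
    (hΦ : AllP X j r Z Φ) : AllP X j r Z Ψ := by
  induction j generalizing r Z with
  | zero => exact h _ hΦ
  | succ j ih => exact Filter.Eventually.mono hΦ fun s hs => ih hs

lemma AllP_and {j r : ℕ} {Z : Set ℕ} {Φ Ψ : Set ℕ → Prop}
    (hΦ : AllP X j r Z Φ) (hΨ : AllP X j r Z Ψ) : AllP X j r Z (fun Z => Φ Z ∧ Ψ Z) := by
  induction j generalizing r Z with
  | zero => exact ⟨hΦ, hΨ⟩
  | succ j ih => 
    exact (Filter.Eventually.and hΦ hΨ).mono fun s hs => ih hs.1 hs.2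

lemma AllP_bump {j r : ℕ} {Z : Set ℕ} {Φ : Set ℕ → Prop} (hd : ∀ Z Z', Z ⊆ Z' → Φ Z' → Φ Z)
    (hΦ : AllP X j r Z Φ) : AllP X (j + 1) r Z Φ := by
  induction j generalizing r Z with
  | zero => exact Filter.Eventually.of_forall fun s => hd _ _ inter_subset_left hΦ
  | succ j ih => exact Filter.Eventually.mono hΦ fun s hs => ih hs

lemma AllP_le {j j' r : ℕ} {Z : Set ℕ} {Φ : Set ℕ → Prop} (hd : ∀ Z Z', Z ⊆ Z' → Φ Z' → Φ Z)
    (hj : j ≤ j') (hΦ : AllP X j r Z Φ) : AllP X j' r Z Φ := by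
  induction hj with
  | refl => exact hΦ
  | step _ ih => exact AllP_bump hd ih

lemma AllP_exists {j r : ℕ} {Z : Set ℕ} {Φ : Set ℕ → Prop} (hZ : Z ∈ Cells X r)
    (hΦ : AllP X j r Z Φ) : ∃ Z' ∈ Cells X (r + j), Φ Z' := by
  induction j generalizing r Z with
  | zero => exact ⟨Z, hZ, hΦ⟩
  | succ j ih =>
    have := FF_neBot r
    obtain ⟨s, hs⟩ := Filter.Eventually.exists hΦ
    have := ih (r := r + 1) ⟨Z, hZ, s, trivial, rfl⟩ hs
    rwa [show r + (j + 1) = r + 1 + j by omega]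

lemma Cells_countable (r : ℕ) : (Cells X r).Countable := by
  induction r with
  | zero => exact Set.countable_singleton _
  | succ r ih => exact ih.image2 (Set.countable_univ) _

lemma Cells_infinite (hX : PartitionSystem X) {r : ℕ} {Z : Set ℕ} (hZ : Z ∈ Cells X r) :
    Z.Infinite := by
  have : ∃ s : ∀ i : ℕ, Fin (i + 1) → ℕ, Z = ⋂ i ∈ Finset.range r, X i (s i) := by
    induction r generalizing Z with
    | zero => exact ⟨fun _ _ => 0, by simpa [Cells] using hZ⟩
    | succ r ih =>
      obtain ⟨Z', hZ', t, -, rfl⟩ := hZ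
      obtain ⟨s, rfl⟩ := ih hZ'
      refine ⟨Function.update s r t, ?_⟩
      ext k
      simp only [mem_inter_iff, mem_iInter, Finset.mem_range]
      constructor
      · rintro ⟨h1, h2⟩ i hi
        by_cases hir : i = r
        · subst hir; simpa using h2
        · rw [Function.update_of_ne hir]; exact h1 i (by omega)
      · intro h
        refine ⟨fun i hi => ?_, ?_⟩
        · have := h i (by omega)
          rwa [Function.update_of_ne (by omega)] at this
        · simpa using h r (by omega)
  obtain ⟨s, rfl⟩ := this
  exact hX.cross _ _

lemma fin_down (B : Set ℕ) : ∀ Z Z' : Set ℕ, Z ⊆ Z' → (B ∩ Z').Finite → (B ∩ Z).Finite :=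
  fun _ _ h h' => h'.subset (inter_subset_inter_right _ h)

variable (X) in
def LL (f : ℕ → D) (r : ℕ) (Z : Set ℕ) : Filter D where
  sets := {U | ∃ N, AllP X N r Z (fun Z' => (f ⁻¹' Uᶜ ∩ Z').Finite)}
  univ_sets := ⟨0, by simp [AllP]⟩
  sets_of_superset := by
    rintro U V ⟨N, h⟩ hUV
    refine ⟨N, AllP_mono (fun Z hZ => hZ.subset ?_) h⟩
    exact inter_subset_inter_left _ (preimage_mono (compl_subset_compl.2 hUV))
  inter_sets := by
    rintro U V ⟨N, h⟩ ⟨N', h'⟩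
    refine ⟨max N N', ?_⟩
    have h1 := AllP_le (fin_down _) (le_max_left N N') h
    have h2 := AllP_le (fin_down _) (le_max_right N N') h'
    refine AllP_mono (fun Z hZ => (hZ.1.union hZ.2).subset ?_) (AllP_and h1 h2)
    rintro k ⟨hk, hkZ⟩
    by_cases hU : f k ∈ U
    · right; exact ⟨fun hV => hk ⟨hU, hV⟩, hkZ⟩
    · left; exact ⟨hU, hkZ⟩

lemma LL_step {f : ℕ → D} {r : ℕ} {Z : Set ℕ} {U : Set D} (h : U ∈ LL X f r Z) :
    ∀ᶠ s in FF r, U ∈ LL X f (r + 1) (Z ∩ X r s) := by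
  obtain ⟨N, h⟩ := h
  have h1 : AllP X (N + 1) r Z _ := AllP_bump (fin_down _) h
  exact Filter.Eventually.mono h1 fun s hs => ⟨N, hs⟩

lemma LL_good (f : ℕ → D) (j r m : ℕ) : ∃ M, ∀ Z, LL X f r Z ≤ JJ M →
    AllP X j r Z (fun Z' => LL X f (r + j) Z' ≤ JJ m) := by
  induction j generalizing r with
  | zero => exact ⟨m, fun Z h => h⟩
  | succ j ih =>
    obtain ⟨M, hM⟩ := ih (r + 1)
    refine ⟨M + r + 1, fun Z hZ => ?_⟩
    have := multi_step (m := M) r (fun s => LL X f (r + 1) (Z ∩ X r s))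
      (fun U hU => LL_step (hZ hU))
    refine Filter.Eventually.mono this fun s hs => ?_
    rw [show r + (j + 1) = r + 1 + j by omega]
    exact hM _ hs

lemma LL_unbounded (hX : PartitionSystem X) {f : ℕ → D} {r : ℕ} {Z : Set ℕ} {U : Set D}
    (hZ : Z ∈ Cells X r) (hU : U ∈ LL X f r Z) : ∃ k ∈ Z, f k ∈ U := by
  by_contra hcon
  push Not at hcon
  obtain ⟨N, h⟩ := hU
  have key : ∀ N r Z', Z' ⊆ Z → AllP X N r Z' (fun Z' => (f ⁻¹' Uᶜ ∩ Z').Finite) →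
      AllP X N r Z' (fun Z' => Z'.Finite) := by
    intro N
    induction N with
    | zero =>
      intro r Z' hZ' h
      refine Set.Finite.subset h fun k hk => ⟨hcon k (hZ' hk), hk⟩
    | succ N ih =>
      intro r Z' hZ' h
      exact Filter.Eventually.mono h fun s hs => ih _ _ (inter_subset_left.trans hZ') hs
  obtain ⟨Z', hZ', hfin⟩ := AllP_exists hZ (key N r Z subset_rfl h)
  exact Cells_infinite hX hZ' hfin

lemma finOmega'_AllP {A : Set ℕ} (hA : A ∈ FinOmega' X) :
    ∃ N, AllP X N 0 univ (fun Z => (A ∩ Z).Finite) := by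
  obtain ⟨F, B, hB, hAB⟩ := hA
  obtain ⟨N, hN⟩ : ∃ N, ∀ n ∈ F, n < N := ⟨F.sup id + 1, fun n hn =>
    Nat.lt_succ_of_le (Finset.le_sup (f := id) hn)⟩
  refine ⟨N, ?_⟩
  have key : ∀ j r Z, r + j = N → {k ∈ A ∩ Z | ∀ n ∈ F, r ≤ n → k ∉ B n}.Finite →
      AllP X j r Z (fun Z => (A ∩ Z).Finite) := by
    intro j
    induction j with
    | zero =>
      intro r Z hr h
      refine Set.Finite.subset h fun k hk => ⟨hk, fun n hn hrn => ?_⟩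
      have := hN n hn
      omega
    | succ j ih =>
      intro r Z hr h
      have hr' : ∀ᶠ s in FF r, r ∈ F → (B r ∩ X r s).Finite := by
        by_cases hrF : r ∈ F
        · have := (mem_FinPow _ _).1 (hB r hrF)
          filter_upwards [this] with s hs _
          simpa using hs
        · exact Filter.Eventually.of_forall fun s hs => absurd hs hrF
      refine Filter.Eventually.mono hr' fun s hs => ih _ _ (by omega) ?_
      have h2 : {k | r ∈ F ∧ k ∈ B r ∩ X r s}.Finite := by
        by_cases hrF : r ∈ F
        · exact (hs hrF).subset fun k hk => hk.2
        · exact Set.finite_empty.subset fun k hk => absurd hk.1 hrF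
      refine (h.union h2).subset ?_
      rintro k ⟨⟨hkA, hkZ, hkX⟩, hk⟩
      by_cases hkr : r ∈ F ∧ k ∈ B r
      · right; exact ⟨hkr.1, hkr.2, hkX⟩
      · left
        refine ⟨⟨hkA, hkZ⟩, fun n hn hrn hkn => ?_⟩
        rcases Nat.eq_or_lt_of_le hrn with rfl | hlt
        · exact hkr ⟨hn, hkn⟩
        · exact hk n hn hlt hkn
  refine key N 0 univ (by omega) (Set.finite_empty.subset ?_)
  rintro k ⟨⟨hkA, -⟩, hk⟩
  have := hAB hkA
  simp only [mem_iUnion] at this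
  obtain ⟨n, hn, hkn⟩ := this
  exact hk n hn (Nat.zero_le _) hkn

theorem main (hX : PartitionSystem X) (f : ℕ → D)
    (hf : ∀ A ∈ FinOmega, f ⁻¹' A ∈ FinOmega' X) : False := by
  have hJ : ∀ m, LL X f 0 univ ≤ JJ m := fun m U hU =>
    finOmega'_AllP (hf _ (compl_mem_FinOmega hU))
  let Good : Set (Set ℕ) := {Z | (∃ r, Z ∈ Cells X r) ∧
    ∀ e, ∃ k ∈ Z, 1 ≤ (f k).1 ∧ e < lam 1 (f k)}
  have hgood : ∀ r Z, Z ∈ Cells X r → LL X f r Z ≤ JJ 1 → Z ∈ Good := by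
    intro r Z hZ h
    exact ⟨⟨r, hZ⟩, fun e => LL_unbounded hX hZ (h (gt_mem_JJ 0 e))⟩
  have hcount : Good.Countable := by
    refine (Set.countable_iUnion (fun r => Cells_countable (X := X) r)).mono ?_
    rintro Z ⟨⟨r, hr⟩, -⟩
    exact mem_iUnion.2 ⟨r, hr⟩
  have hne : Good.Nonempty := by
    exact ⟨univ, hgood 0 univ rfl (hJ 1)⟩
  obtain ⟨z, hz⟩ := hcount.exists_eq_range hne
  have hzG : ∀ i, z i ∈ Good := fun i => hz ▸ mem_range_self i
  have : ∀ i j : ℕ, ∃ k ∈ z i, 1 ≤ (f k).1 ∧ i + j < lam 1 (f k) := fun i j => (hzG i).2 _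
  choose g hg1 hg2 hg3 using this
  let A : Set ℕ := {k | ∃ i j, g i j = k}
  have hU : (f '' A)ᶜ ∈ JJ 1 := by
    apply JJ_succ
    refine Filter.Eventually.of_forall fun e => ?_
    have hT : ((fun q : ℕ × ℕ => f (g q.1 q.2)) '' (Set.Iic e ×ˢ Set.Iic e)).Finite :=
      ((Set.finite_Iic e).prod (Set.finite_Iic e)).image _
    filter_upwards [finite_compl_mem_JJ hT] with x hx hxe hxA
    apply hx
    obtain ⟨k, ⟨i, j, rfl⟩, rfl⟩ := hxA
    have h1 := hg3 i j
    have h2 := hxe.2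
    simp only [Nat.zero_add] at h2
    refine ⟨(i, j), ⟨?_, ?_⟩, rfl⟩
    · show i ≤ e
      omega
    · show j ≤ e
      omega
  obtain ⟨N, hN⟩ := finOmega'_AllP (hf _ (compl_mem_FinOmega hU))
  obtain ⟨M, hM⟩ := LL_good (X := X) f N 0 1
  obtain ⟨Z, hZ, hZ1, hZ2⟩ := AllP_exists (X := X) (r := 0) (Z := univ) rfl
    (AllP_and hN (hM univ (hJ M)))
  have hZG : Z ∈ Good := hgood _ _ hZ hZ2
  rw [hz] at hZG
  obtain ⟨i, rfl⟩ := hZG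
  have hfin : (Set.range (g i)).Finite := by
    refine hZ1.subset ?_
    rintro _ ⟨j, rfl⟩
    refine ⟨?_, hg1 i j⟩
    simp only [compl_compl, mem_preimage]
    exact ⟨_, ⟨i, j, rfl⟩, rfl⟩
  obtain ⟨b, hb⟩ := (hfin.image (fun k => lam 1 (f k))).bddAbove
  have := hb ⟨_, ⟨b, rfl⟩, rfl⟩
  have h3 := hg3 i b
  simp only at this
  omega

end cells

end FinOmegaAux

/-- `Fin_ω` does not embed isomorphically into `Fin'_ω`:
there is no bijection `f : ω → ∑_{i>0} ω^i` with `f⁻¹[A] ∈ Fin'_ω` for all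
`A ∈ Fin_ω`. -/
theorem finOmega_not_isoContained_finOmega'
    (X : (n : ℕ) → (Fin (n + 1) → ℕ) → Set ℕ) (hX : PartitionSystem X) :
    ¬ ∃ f : ℕ → (Σ n : ℕ, Fin (n + 1) → ℕ), Function.Bijective f ∧
        ∀ A ∈ FinOmega, f ⁻¹' A ∈ FinOmega' X := by
  rintro ⟨f, -, hf⟩
  exact FinOmegaAux.main hX f hf
end
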